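/- Let S be a finite linearly ordered set. The map assigning to a permutation of S the set partition of S whose blocks are the orbits (cycles) of the permutation restricts to a bijection from the set of permutations of S all of whose non-trivial cycles are decreasing onto the set of all set partitions of S. Consequently, for all m₁, m₂ ≥ 0, the number of permutations of {1, …, m} having exactly m₁ fixed points and exactly m₂ non-trivial cycles, all of which are decreasing, equals C(m, m₁) · p₂(m − m₁, m₂). -/

import Mathlib

open Finset

namespace KroneckerPaper

/-- A (removable) corner of a Young diagram: a cell with no cell below it nor to its right
(in English notation; equivalently, in French notation, a cell at the right end of its row
with no cell above it). -/
def IsCorner (μ : YoungDiagram) (c : ℕ × ℕ) : Prop :=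
  c ∈ μ ∧ (c.1 + 1, c.2) ∉ μ ∧ (c.1, c.2 + 1) ∉ μ

/-- The *first corner* of a Young diagram: the unique corner lying on a row of maximal
length. -/
def IsFirstCorner (μ : YoungDiagram) (c : ℕ × ℕ) : Prop :=
  IsCorner μ c ∧ μ.rowLen c.1 = μ.rowLen 0

/-- `μ'` is obtained from `μ` by adding one new cell which is a corner of `μ'`. -/
def AddCorner (μ μ' : YoungDiagram) : Prop :=
  ∃ c, IsCorner μ' c ∧ c ∉ μ.cells ∧ μ'.cells = insert c μ.cells

/-- `μ'` is obtained from `μ` by removing one corner of `μ`. -/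
def RemoveCorner (μ μ' : YoungDiagram) : Prop :=
  ∃ c, IsCorner μ c ∧ μ'.cells = μ.cells.erase c

/-- `μ' ≠ μ` *differs from `μ` by the position of a corner*: it is obtained from `μ` by
removing a corner of `μ` and adding a new cell which is a corner of `μ'`. -/
def MoveCorner (μ μ' : YoungDiagram) : Prop :=
  μ' ≠ μ ∧ ∃ c c', IsCorner μ c ∧ IsCorner μ' c' ∧ c' ∉ μ.cells.erase c ∧
    μ'.cells = insert c' (μ.cells.erase c)

/-- The one-row Young diagram `(n)`. -/
def rowDiagram (n : ℕ) : YoungDiagram :=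
  YoungDiagram.ofRowLens [n] (List.pairwise_singleton _ n).sortedGE

/-- The Young diagram obtained by deleting the first (longest) row, i.e. the truncated
partition `λ̄ = (λ₂, …, λ_m)` of `λ = (λ₁, λ₂, …, λ_m)`. -/
def truncate (μ : YoungDiagram) : YoungDiagram where
  cells := (μ.cells.filter fun c => 1 ≤ c.1).image fun c => (c.1 - 1, c.2)
  isLowerSet := by
    rintro ⟨i1, j1⟩ ⟨i2, j2⟩ ⟨hi, hj⟩ h
    simp only [Finset.coe_image, Finset.coe_filter, Set.mem_image, Set.mem_setOf_eq,
      Finset.mem_coe, YoungDiagram.mem_cells] at h ⊢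
    obtain ⟨⟨a, b⟩, ⟨ha, ha1⟩, heq⟩ := h
    simp only [Prod.mk.injEq] at heq
    exact ⟨(i2 + 1, j2), ⟨μ.up_left_mem (by omega) (by omega) ha, by omega⟩, by simp⟩

/-- A *Kronecker tableau* of length `k`, initial shape `μ` and final shape `lam`:
a sequence `μ⁰ = μ, μ¹, …, μ^k = lam` of diagrams such that each `μ^{i+1}` either differs
from `μ^i` by the position of a corner, or equals `μ^i` together with the datum of a
distinguished corner of `μ^{i+1}` other than its first corner. -/
structure KroneckerTableau (k : ℕ) (μ lam : YoungDiagram) where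
  seq : Fin (k + 1) → YoungDiagram
  dist : Fin k → Option (ℕ × ℕ)
  init : seq 0 = μ
  final : seq (Fin.last k) = lam
  step : ∀ i : Fin k,
    (MoveCorner (seq i.castSucc) (seq i.succ) ∧ dist i = none) ∨
    (seq i.succ = seq i.castSucc ∧
      ∃ c, dist i = some c ∧ IsCorner (seq i.succ) c ∧ ¬ IsFirstCorner (seq i.succ) c)

/-- A *partial standard tableau* of shape `α` with labels in `{1, …, k}`: a labelling of the
cells of `α` by pairwise distinct integers of `{1, …, k}` increasing along rows and columns
(cells outside `α` are labelled `0` by convention). -/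
structure PartialST (α : YoungDiagram) (k : ℕ) where
  label : ℕ × ℕ → ℕ
  mem_of_cell : ∀ c ∈ α, label c ∈ Finset.Icc 1 k
  zero_of_not_cell : ∀ c, c ∉ α → label c = 0
  injOn : ∀ c ∈ α, ∀ c' ∈ α, label c = label c' → c = c'
  row_incr : ∀ i j1 j2 : ℕ, j1 < j2 → (i, j2) ∈ α → label (i, j1) < label (i, j2)
  col_incr : ∀ i1 i2 j : ℕ, i1 < i2 → (i2, j) ∈ α → label (i1, j) < label (i2, j)

/-- `f^α`, the number of standard Young tableaux of shape `α`. -/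
noncomputable def fSYT (α : YoungDiagram) : ℕ :=
  Nat.card (PartialST α α.card)

/-- `p₂ n k`: the number of partitions of an `n`-element set into exactly `k` blocks, each of
size at least `2` (associated Stirling numbers of the second kind). -/
noncomputable def p2 (n k : ℕ) : ℕ :=
  Nat.card {P : Finpartition (Finset.univ : Finset (Fin n)) //
    P.parts.card = k ∧ ∀ b ∈ P.parts, 2 ≤ b.card}

/-- Every non-trivial cycle of `π` is *decreasing*: `π x < x` for every element `x` of a
non-trivial cycle which is not the minimum of its cycle. -/
def DecCycles {S : Type*} [LinearOrder S] (π : Equiv.Perm S) : Prop :=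
  ∀ x, π x ≠ x → (∃ y, π.SameCycle x y ∧ y < x) → π x < x

/-- A pair `(T, π)` of a partial standard tableau of shape `α` with labels in `{1, …, k}`
and a permutation `π` of `{1, …, k}` all of whose non-trivial cycles are decreasing, such
that every fixed point of `π` is a label of `T` and every label of `T` is the greatest
element of its cycle in `π`. -/
structure TabPerm (k : ℕ) (α : YoungDiagram) where
  T : PartialST α k
  π : Equiv.Perm ℕ
  perm_of : ∀ x : ℕ, x ∉ Finset.Icc 1 k → π x = x
  dec : DecCycles π
  fix_mem : ∀ x ∈ Finset.Icc 1 k, π x = x → ∃ c ∈ α, T.label c = x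
  label_max : ∀ c ∈ α, ∀ y : ℕ, π.SameCycle (T.label c) y → y ≤ T.label c


/-- The set partition of `S` into the orbits (cycles) of a permutation of `S`. -/
def orbitBlocks {S : Type*} (π : Equiv.Perm S) : Set (Set S) :=
  Set.range fun x => {y | π.SameCycle x y}

/-- `B` is the set of blocks of a set partition of `S`: blocks are nonempty and every
element of `S` lies in exactly one block. -/
def IsSetPartitionOn (S : Type*) (B : Set (Set S)) : Prop :=
  (∀ b ∈ B, b.Nonempty) ∧ ∀ x : S, ∃! b, b ∈ B ∧ x ∈ b

/-!
A permutation with decreasing cycles is determined by its orbits: on a non-minimal element `x` it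
is forced to be the predecessor of `x` within the orbit, and injectivity then forces its value on
the minimum. Conversely the map sending each element to its predecessor within its class, and the
minimum of each class to the maximum, is a permutation with decreasing cycles whose orbits are the
given classes. For the count, fixed-point-free permutations correspond to partitions without
singleton blocks, and a permutation with a prescribed set of fixed points is the extension of a
fixed-point-free one on the complement, transported along the increasing bijection from an initial
segment of the natural numbers.
-/

open Equiv.Perm (SameCycle)

section DecreasingCycles

variable {S : Type*} [LinearOrder S] {π σ : Equiv.Perm S}

theorem decCycles_iff_apply_lt :
    DecCycles π ↔ ∀ x y, π.SameCycle x y → y < x → π x < x := by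
  refine ⟨fun hπ x y hxy hlt => hπ x (fun hx => ?_) ⟨y, hxy, hlt⟩,
    fun h x _ ⟨y, hxy, hlt⟩ => h x y hxy hlt⟩
  exact hlt.ne' (hxy.eq_of_left hx)

theorem DecCycles.apply_lt (hπ : DecCycles π) {x y : S} (hxy : π.SameCycle x y) (hlt : y < x) :
    π x < x :=
  decCycles_iff_apply_lt.1 hπ x y hxy hlt

section WellFounded

variable [WellFoundedLT S]

theorem DecCycles.le_apply (hπ : DecCycles π) {x y : S} (hxy : π.SameCycle x y) (hlt : y < x) :
    y ≤ π x := by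
  induction y using WellFoundedLT.induction generalizing x with
  | ind y ih =>
    by_contra! hπx
    have hxπy : π.SameCycle x (π y) := Equiv.Perm.sameCycle_apply_right.2 hxy
    have hyπx : π.SameCycle y (π x) := Equiv.Perm.sameCycle_apply_right.2 hxy.symm
    have hπy : π y < y := hπ.apply_lt hyπx hπx
    -- Whichever of `π x` and `π y` is larger violates the claim at an element below `y`.
    rcases lt_trichotomy (π x) (π y) with h | h | h
    · exact h.not_ge (ih (π y) hπy hxπy (hπy.trans hlt))
    · exact hlt.ne' (π.injective h)
    · exact h.not_ge (ih (π x) hπx hyπx hπx)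

theorem DecCycles.apply_le_apply (hπ : DecCycles π) (hσ : DecCycles σ)
    (hset : SameCycle.setoid π = SameCycle.setoid σ) {x y : S} (hxy : π.SameCycle x y)
    (hlt : y < x) : π x ≤ σ x := by
  have hπx : π.SameCycle x (π x) := Equiv.Perm.sameCycle_apply_right.2 (.refl π x)
  exact hσ.le_apply ((Setoid.ext_iff.1 hset x (π x)).1 hπx) (hπ.apply_lt hxy hlt)

theorem DecCycles.eq_of_setoid_eq (hπ : DecCycles π) (hσ : DecCycles σ)
    (hset : SameCycle.setoid π = SameCycle.setoid σ) : π = σ := by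
  have hiff : ∀ {x y}, π.SameCycle x y ↔ σ.SameCycle x y := Setoid.ext_iff.1 hset _ _
  have eq_of_not_min {x y : S} (hxy : π.SameCycle x y) (hlt : y < x) : π x = σ x :=
    (hπ.apply_le_apply hσ hset hxy hlt).antisymm
      (hσ.apply_le_apply hπ hset.symm (hiff.1 hxy) hlt)
  ext x
  by_cases hmin : ∃ y, π.SameCycle x y ∧ y < x
  · obtain ⟨y, hxy, hlt⟩ := hmin
    exact eq_of_not_min hxy hlt
  -- The `π`-preimage `z` of `σ x` must be `x`: otherwise it is not minimal, and `σ z = π z = σ x`.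
  · push Not at hmin
    obtain ⟨z, hz⟩ := π.surjective (σ x)
    have hxz : π.SameCycle x z := by
      rw [← Equiv.Perm.sameCycle_apply_right, hz, hiff]
      exact Equiv.Perm.sameCycle_apply_right.2 (.refl σ x)
    obtain rfl | hlt := (hmin z hxz).eq_or_lt
    · exact hz
    · exact absurd (σ.injective ((eq_of_not_min hxz.symm hlt).symm.trans hz)) hlt.ne'

end WellFounded

end DecreasingCycles

section CyclicPredecessor

variable {S : Type*} [LinearOrder S] {r : Setoid S}

theorem sameCycle_setoid_le_of_rel_apply {α : Type*} {r : Setoid α} {π : Equiv.Perm α}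
    (hrel : ∀ x, r x (π x)) : SameCycle.setoid π ≤ r := by
  rintro x _ ⟨i, rfl⟩
  induction i using Int.induction_on with
  | zero => exact r.refl x
  | succ n ih =>
    rw [add_comm, zpow_add, zpow_one, Equiv.Perm.mul_apply]
    exact r.trans ih (hrel _)
  | pred n ih =>
    refine r.trans ih (r.symm ?_)
    rw [sub_eq_neg_add, zpow_add, Equiv.Perm.mul_apply]
    simpa using hrel (π⁻¹ ((π ^ (-(n : ℤ))) x))

theorem sameCycle_setoid_eq_of_apply_lt [WellFoundedLT S] {π : Equiv.Perm S}
    (hrel : ∀ x, r x (π x)) (hlt : ∀ x y, r x y → y < x → π x < x) :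
    SameCycle.setoid π = r := by
  have hle : SameCycle.setoid π ≤ r := sameCycle_setoid_le_of_rel_apply hrel
  have exists_min (x : S) : ∃ m, π.SameCycle x m ∧ ∀ y, r x y → m ≤ y := by
    induction x using WellFoundedLT.induction with
    | ind x ih =>
      by_cases hx : ∃ y, r x y ∧ y < x
      · obtain ⟨y, hxy, hyx⟩ := hx
        obtain ⟨m, hm, hmin⟩ := ih (π x) (hlt x y hxy hyx)
        exact ⟨m, Equiv.Perm.sameCycle_apply_left.1 hm,
          fun z hz => hmin z (r.trans (r.symm (hrel x)) hz)⟩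
      · push Not at hx
        exact ⟨x, .refl π x, hx⟩
  refine le_antisymm hle fun {x y} hxy => ?_
  obtain ⟨m, hxm, hm⟩ := exists_min x
  obtain ⟨n, hyn, hn⟩ := exists_min y
  obtain rfl : m = n :=
    (hm n (r.trans hxy (hle hyn))).antisymm (hn m (r.trans (r.symm hxy) (hle hxm)))
  exact hxm.trans hyn.symm

/-- `z` is the cyclic predecessor of `x` in its class for `r`: the greatest element of the class
below `x` or, if `x` is the least element of its class, the greatest element of the class. -/
structure IsCyclicPred (r : Setoid S) (x z : S) : Prop where
  rel : r x z
  lt_of_lt : ∀ y, r x y → y < x → z < x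
  ge_of_lt : ∀ y, r x y → y < x → y ≤ z
  ge_of_isMin : (∀ y, r x y → x ≤ y) → ∀ y, r x y → y ≤ z

theorem exists_isCyclicPred [Finite S] (r : Setoid S) (x : S) : ∃ z, IsCyclicPred r x z := by
  by_cases hx : ∃ y, r x y ∧ y < x
  · obtain ⟨z, ⟨hxz, hzx⟩, hz⟩ :=
      Set.exists_max_image {y | r x y ∧ y < x} id (Set.toFinite _) hx
    exact ⟨z, hxz, fun _ _ _ => hzx, fun y hxy hyx => hz y ⟨hxy, hyx⟩,
      fun hmin => absurd hzx (hmin z hxz).not_gt⟩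
  · push Not at hx
    obtain ⟨z, hxz, hz⟩ := Set.exists_max_image {y | r x y} id (Set.toFinite _) ⟨x, r.refl x⟩
    exact ⟨z, hxz, fun y hxy hyx => absurd hyx (hx y hxy).not_gt, fun y hxy _ => hz y hxy,
      fun _ => hz⟩

theorem IsCyclicPred.left_le_left {x y z : S} (hx : IsCyclicPred r x z)
    (hy : IsCyclicPred r y z) : y ≤ x := by
  by_contra! hlt
  have hyx : r y x := r.trans hy.rel (r.symm hx.rel)
  have hxz : x ≤ z := hy.ge_of_lt x hyx hlt
  have hzy : z < y := hy.lt_of_lt x hyx hlt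
  have hxmin (w : S) (hxw : r x w) : x ≤ w :=
    not_lt.1 fun hwx => hxz.not_gt (hx.lt_of_lt w hxw hwx)
  exact hzy.not_ge (hx.ge_of_isMin hxmin y (r.symm hyx))

theorem IsCyclicPred.left_unique {x y z : S} (hx : IsCyclicPred r x z)
    (hy : IsCyclicPred r y z) : x = y :=
  (hy.left_le_left hx).antisymm (hx.left_le_left hy)

theorem exists_decCycles_setoid_eq [Finite S] (r : Setoid S) :
    ∃ π : Equiv.Perm S, DecCycles π ∧ SameCycle.setoid π = r := by
  choose f hf using exists_isCyclicPred r
  have hinj : Function.Injective f := fun x y hxy => (hf x).left_unique (hxy ▸ hf y)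
  let π : Equiv.Perm S := Equiv.ofBijective f (Finite.injective_iff_bijective.1 hinj)
  have hπ : SameCycle.setoid π = r :=
    sameCycle_setoid_eq_of_apply_lt (fun x => (hf x).rel) fun x => (hf x).lt_of_lt
  refine ⟨π, decCycles_iff_apply_lt.2 fun x y hxy => (hf x).lt_of_lt y ?_, hπ⟩
  exact (Setoid.ext_iff.1 hπ x y).1 hxy

theorem bijOn_sameCycle_setoid [Finite S] :
    Set.BijOn SameCycle.setoid {π : Equiv.Perm S | DecCycles π} Set.univ :=
  ⟨Set.mapsTo_univ _ _, fun _ hπ _ hσ => hπ.eq_of_setoid_eq hσ,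
    fun r _ => exists_decCycles_setoid_eq r⟩

end CyclicPredecessor

section SetPartitions

variable {S : Type*}

theorem orbitBlocks_eq_classes (π : Equiv.Perm S) :
    orbitBlocks π = (SameCycle.setoid π).classes := by
  ext b
  refine exists_congr fun x => ?_
  rw [eq_comm]
  simp only [Equiv.Perm.sameCycle_comm (x := x)]
  rfl

theorem isSetPartitionOn_iff_isPartition {B : Set (Set S)} :
    IsSetPartitionOn S B ↔ Setoid.IsPartition B :=
  and_congr_left' ⟨fun h hempty => Set.not_nonempty_empty (h ∅ hempty),
    fun h _ hb => Set.nonempty_iff_ne_empty.2 (ne_of_mem_of_not_mem hb h)⟩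

theorem bijOn_classes :
    Set.BijOn Setoid.classes (Set.univ : Set (Setoid S)) {B | IsSetPartitionOn S B} := by
  refine ⟨fun r _ => isSetPartitionOn_iff_isPartition.2 r.isPartition_classes,
    fun r _ s _ h => Setoid.classes_inj.2 h, fun B hB => ?_⟩
  exact ⟨_, Set.mem_univ _,
    Setoid.classes_mkClasses B (isSetPartitionOn_iff_isPartition.1 hB)⟩

theorem bijOn_orbitBlocks [Finite S] [LinearOrder S] :
    Set.BijOn orbitBlocks {π : Equiv.Perm S | DecCycles π} {B | IsSetPartitionOn S B} :=
  (bijOn_classes.comp bijOn_sameCycle_setoid).congr fun π _ => (orbitBlocks_eq_classes π).symm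

end SetPartitions

section Finpartitions

variable {S : Type*} [Fintype S] [DecidableEq S]

theorem ofSetoid_injective {r s : Setoid S} [DecidableRel r.r] [DecidableRel s.r]
    (h : Finpartition.ofSetoid r = Finpartition.ofSetoid s) : r = s := by
  ext x y
  rw [← Finpartition.mem_part_ofSetoid_iff_rel, h, Finpartition.mem_part_ofSetoid_iff_rel]

theorem mem_parts_iff_exists_part_eq (P : Finpartition (univ : Finset S)) {b : Finset S} :
    b ∈ P.parts ↔ ∃ x, P.part x = b := by
  refine ⟨fun hb => ?_, ?_⟩
  · obtain ⟨x, hx⟩ := P.nonempty_of_mem_parts hb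
    exact ⟨x, P.part_eq_of_mem hb hx⟩
  · rintro ⟨x, rfl⟩
    exact P.part_mem.2 (mem_univ x)

theorem ofSetoid_ker_part (P : Finpartition (univ : Finset S))
    [DecidableRel (Setoid.ker P.part).r] : Finpartition.ofSetoid (Setoid.ker P.part) = P := by
  have hpart (x : S) : (Finpartition.ofSetoid (Setoid.ker P.part)).part x = P.part x := by
    ext y
    rw [Finpartition.mem_part_ofSetoid_iff_rel, Setoid.ker_def,
      P.mem_part_iff_part_eq_part (mem_univ y) (mem_univ x), eq_comm]
  ext b
  simp only [mem_parts_iff_exists_part_eq, hpart]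

open Classical in
/-- The partition of a finite type into the orbits of a permutation, as a `Finpartition`. -/
noncomputable def orbitFinpartition (π : Equiv.Perm S) : Finpartition (univ : Finset S) :=
  Finpartition.ofSetoid (SameCycle.setoid π)

variable (π : Equiv.Perm S)

theorem mem_part_orbitFinpartition {x y : S} :
    y ∈ (orbitFinpartition π).part x ↔ π.SameCycle x y := by
  classical exact Finpartition.mem_part_ofSetoid_iff_rel

theorem part_orbitFinpartition {x : S} (hx : π x ≠ x) :
    (orbitFinpartition π).part x = (π.cycleOf x).support := by
  ext y
  rw [mem_part_orbitFinpartition, Equiv.Perm.mem_support_cycleOf_iff' hx]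

theorem two_le_card_part_orbitFinpartition_iff {x : S} :
    2 ≤ #((orbitFinpartition π).part x) ↔ π x ≠ x := by
  refine ⟨fun h hx => ?_, fun hx => ?_⟩
  · obtain ⟨y, hy, hyx⟩ := exists_mem_ne h x
    exact hyx (((mem_part_orbitFinpartition π).1 hy).eq_of_left hx).symm
  · rw [part_orbitFinpartition π hx]
    exact Equiv.Perm.two_le_card_support_cycleOf_iff.2 hx

theorem forall_two_le_card_parts_orbitFinpartition_iff :
    (∀ b ∈ (orbitFinpartition π).parts, 2 ≤ #b) ↔ π.support = univ := by
  simp only [mem_parts_iff_exists_part_eq, forall_exists_index, forall_apply_eq_imp_iff,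
    two_le_card_part_orbitFinpartition_iff, eq_univ_iff_forall, Equiv.Perm.mem_support]

theorem card_filter_parts_orbitFinpartition :
    #{b ∈ (orbitFinpartition π).parts | 2 ≤ #b} = π.cycleType.card := by
  have eq_cycleOf {c : Equiv.Perm S} (hc : c ∈ π.cycleFactorsFinset) :
      ∃ x ∈ c.support, π x ≠ x ∧ c = π.cycleOf x := by
    obtain ⟨x, hx⟩ := (Equiv.Perm.mem_cycleFactorsFinset_iff.1 hc).1.nonempty_support
    have hsupp := Equiv.Perm.mem_cycleFactorsFinset_support_le hc
    exact ⟨x, hx, Equiv.Perm.mem_support.1 (hsupp hx), Equiv.Perm.cycle_is_cycleOf hx hc⟩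
  rw [Equiv.Perm.cycleType_def, Multiset.card_map, ← card_def]
  symm
  refine card_bij (fun c _ => c.support) (fun c hc => ?_) (fun c hc d hd hcd => ?_) fun b hb => ?_
  · obtain ⟨x, -, hx, rfl⟩ := eq_cycleOf hc
    rw [← part_orbitFinpartition π hx, mem_filter, mem_parts_iff_exists_part_eq]
    exact ⟨⟨x, rfl⟩, (two_le_card_part_orbitFinpartition_iff π).2 hx⟩
  · obtain ⟨x, hxc, -, hc_eq⟩ := eq_cycleOf hc
    rw [hc_eq, Equiv.Perm.cycle_is_cycleOf (hcd ▸ hxc) hd]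
  · obtain ⟨hb, htwo⟩ := mem_filter.1 hb
    obtain ⟨x, rfl⟩ := (mem_parts_iff_exists_part_eq _).1 hb
    have hx := (two_le_card_part_orbitFinpartition_iff π).1 htwo
    refine ⟨π.cycleOf x, ?_, (part_orbitFinpartition π hx).symm⟩
    exact Equiv.Perm.cycleOf_mem_cycleFactorsFinset_iff.2 (Equiv.Perm.mem_support.2 hx)

end Finpartitions

section Counting

theorem bijOn_orbitFinpartition {S : Type*} [Fintype S] [LinearOrder S] :
    Set.BijOn orbitFinpartition {π : Equiv.Perm S | DecCycles π} Set.univ := by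
  classical
  refine ⟨Set.mapsTo_univ _ _, fun π hπ σ hσ h => ?_, fun P _ => ?_⟩
  · exact hπ.eq_of_setoid_eq hσ (ofSetoid_injective h)
  · obtain ⟨π, hπ, hker⟩ := exists_decCycles_setoid_eq (Setoid.ker P.part)
    refine ⟨π, hπ, ?_⟩
    simp only [orbitFinpartition, hker, ofSetoid_ker_part]

theorem ncard_decCycles_support_eq_univ (n k : ℕ) :
    {π : Equiv.Perm (Fin n) | DecCycles π ∧ π.support = univ ∧ π.cycleType.card = k}.ncard =
      p2 n k := by
  have hbij := bijOn_orbitFinpartition.subset_right (Set.subset_univ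
    {P : Finpartition (univ : Finset (Fin n)) | #P.parts = k ∧ ∀ b ∈ P.parts, 2 ≤ #b})
  refine .trans (congrArg Set.ncard ?_) hbij.ncard_eq
  ext π
  refine and_congr_right fun _ => ?_
  rw [Set.mem_preimage, Set.mem_ofPred_eq, and_comm,
    ← forall_two_le_card_parts_orbitFinpartition_iff, ← card_filter_parts_orbitFinpartition]
  exact and_congr_left fun htwo => by rw [filter_true_of_mem htwo]

theorem decCycles_extendDomain_iff {α β : Type*} [LinearOrder α] [LinearOrder β] {p : β → Prop}
    [DecidablePred p] (f : α ≃o Subtype p) {g : Equiv.Perm α} :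
    DecCycles (g.extendDomain f.toEquiv) ↔ DecCycles g := by
  have hlt {a b : α} : (f.toEquiv a : β) < f.toEquiv b ↔ a < b :=
    Subtype.coe_lt_coe.trans f.lt_iff_lt
  simp only [decCycles_iff_apply_lt]
  refine ⟨fun h a b hab hba => ?_, fun h x y hxy hyx => ?_⟩
  · have hga := h _ _ (Equiv.Perm.sameCycle_extendDomain.2 hab) (hlt.2 hba)
    rwa [Equiv.Perm.extendDomain_apply_image, hlt] at hga
  · have hpx : p x := by
      by_contra hpx
      exact hyx.ne' (hxy.eq_of_left (Equiv.Perm.extendDomain_apply_not_subtype g _ hpx))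
    have hpy : p y := by
      by_contra hpy
      exact hyx.ne' (hxy.eq_of_right (Equiv.Perm.extendDomain_apply_not_subtype g _ hpy))
    obtain ⟨a, ha⟩ := f.toEquiv.surjective ⟨x, hpx⟩
    obtain ⟨b, hb⟩ := f.toEquiv.surjective ⟨y, hpy⟩
    obtain rfl : (f.toEquiv a : β) = x := by rw [ha]
    obtain rfl : (f.toEquiv b : β) = y := by rw [hb]
    rw [Equiv.Perm.extendDomain_apply_image, hlt]
    exact h a b (Equiv.Perm.sameCycle_extendDomain.1 hxy) (hlt.1 hyx)

theorem bijOn_extendDomain {α β : Type*} {p : β → Prop} [DecidablePred p] (f : α ≃ Subtype p) :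
    Set.BijOn (fun g : Equiv.Perm α => g.extendDomain f) Set.univ
      {π | ∀ x, ¬p x → π x = x} := by
  refine ⟨fun g _ x hx => g.extendDomain_apply_not_subtype f hx,
    (Equiv.Perm.extendDomainHom_injective f).injOn, fun π hπ => ?_⟩
  have hp (x : β) : p (π x) ↔ p x := by
    rw [← not_iff_not]
    exact ⟨fun h => π.injective (hπ _ h) ▸ h, fun h => (hπ x h).symm ▸ h⟩
  refine ⟨f.symm.permCongr (π.subtypePerm hp), Set.mem_univ _, ?_⟩
  ext x
  by_cases hx : p x
  · simp [Equiv.Perm.extendDomain_apply_subtype _ _ hx, Equiv.permCongr_apply]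
  · exact (Equiv.Perm.extendDomain_apply_not_subtype _ _ hx).trans (hπ x hx).symm

theorem filter_fixed_eq_iff_support_eq_compl {S : Type*} [Fintype S] [DecidableEq S]
    {π : Equiv.Perm S} {F : Finset S} :
    ({x | π x = x} : Finset S) = F ↔ π.support = Fᶜ := by
  rw [← compl_inj_iff, compl_filter, Equiv.Perm.support]

variable {S : Type*} [Fintype S] [LinearOrder S]

theorem ncard_decCycles_support_eq (s : Finset S) (k : ℕ) :
    {π : Equiv.Perm S | DecCycles π ∧ π.support = s ∧ π.cycleType.card = k}.ncard =
      p2 #s k := by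
  let f : Fin #s ≃o {x // x ∈ s} := s.orderIsoOfFin rfl
  have hsupp (g : Equiv.Perm (Fin #s)) :
      (g.extendDomain f.toEquiv).support = s ↔ g.support = univ := by
    have hs : univ.map f.toEquiv.asEmbedding = s := by
      ext x
      simpa using ⟨fun ⟨a, ha⟩ => ha ▸ (f a).2, fun hx => ⟨f.symm ⟨x, hx⟩, by simp⟩⟩
    rw [Equiv.Perm.support_extend_domain, ← map_inj (f := f.toEquiv.asEmbedding), hs]
  have hbij := (bijOn_extendDomain f.toEquiv).subset_right
    (r := {π | DecCycles π ∧ π.support = s ∧ π.cycleType.card = k}) fun π hπ x hx =>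
      Equiv.Perm.notMem_support.1 (hπ.2.1 ▸ hx)
  rw [← hbij.ncard_eq, ← ncard_decCycles_support_eq_univ]
  congr 1
  ext g
  simp only [Set.univ_inter, Set.mem_preimage, Set.mem_ofPred_eq, decCycles_extendDomain_iff,
    hsupp, Equiv.Perm.cycleType_extendDomain]

theorem ncard_decCycles_card_fixed_eq (m₁ m₂ : ℕ) :
    {π : Equiv.Perm S | DecCycles π ∧ #{x | π x = x} = m₁ ∧ π.cycleType.card = m₂}.ncard =
      (Fintype.card S).choose m₁ * p2 (Fintype.card S - m₁) m₂ := by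
  classical
  let fixed (π : Equiv.Perm S) : Finset S := {x | π x = x}
  rw [Set.ncard_eq_toFinset_card', card_eq_sum_card_fiberwise (f := fixed)
    (t := powersetCard m₁ univ) fun π hπ =>
      mem_powersetCard.2 ⟨subset_univ _, (Set.mem_toFinset.1 hπ).2.1⟩,
    ← card_univ, ← card_powersetCard]
  refine sum_const_nat fun F hF => ?_
  obtain rfl : #F = m₁ := (mem_powersetCard.1 hF).2
  rw [card_univ, ← card_compl, ← ncard_decCycles_support_eq, Set.ncard_eq_toFinset_card']
  congr 1
  ext π
  simp only [mem_filter, Set.mem_toFinset, Set.mem_ofPred_eq,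
    ← filter_fixed_eq_iff_support_eq_compl]
  exact ⟨fun ⟨⟨hπ, _, hk⟩, hfixed⟩ => ⟨hπ, hfixed, hk⟩,
    fun ⟨hπ, hfixed, hk⟩ => ⟨⟨hπ, congrArg card hfixed, hk⟩, hfixed⟩⟩

end Counting

/-- (i) For a finite linearly ordered set `S`, the orbit-partition map restricts to a
bijection from permutations of `S` all of whose non-trivial cycles are decreasing onto set
partitions of `S`.  (ii) Consequently the number of permutations of `{1, …, m}` with
exactly `m₁` fixed points and exactly `m₂` non-trivial cycles, all decreasing, is
`C(m, m₁) ⬝ p₂(m - m₁, m₂)`. -/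
theorem statement8 :
    (∀ (S : Type) (_ : Fintype S) (_ : LinearOrder S),
      Set.BijOn orbitBlocks {π : Equiv.Perm S | DecCycles π} {B | IsSetPartitionOn S B}) ∧
    (∀ m m₁ m₂ : ℕ,
      Nat.card {π : Equiv.Perm (Fin m) // DecCycles π ∧
          (Finset.univ.filter fun x => π x = x).card = m₁ ∧ π.cycleType.card = m₂} =
        m.choose m₁ * p2 (m - m₁) m₂) :=
  ⟨fun _ _ _ => bijOn_orbitBlocks, fun m m₁ m₂ => by
    have hcount := ncard_decCycles_card_fixed_eq (S := Fin m) m₁ m₂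
    rwa [Fintype.card_fin] at hcount⟩

end KroneckerPaper
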